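/- Let Ψ̄ : ℝ⁴ → ℝ be the unique twice continuously differentiable radially symmetric function with ΔΨ̄(y) + 1/(1+|y|²) = 0 on ℝ⁴ and Ψ̄(0) = 1. Then there exist a constant I ∈ ℝ and a constant C > 0 such that |Ψ̄(y) + (1/2)·ln|y| − I| ≤ C/|y| for all y ∈ ℝ⁴ with |y| ≥ 2. -/

import Mathlib

/-- The Euclidean Laplacian `Δu(y) = Σᵢ ∂²u/∂yᵢ²` on `ℝ⁴`. -/
noncomputable def laplacian (u : EuclideanSpace ℝ (Fin 4) → ℝ)
    (x : EuclideanSpace ℝ (Fin 4)) : ℝ :=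
  ∑ i : Fin 4,
    fderiv ℝ (fun y => fderiv ℝ u y (EuclideanSpace.single i 1)) x (EuclideanSpace.single i 1)

/-!
A radial `Ψ(y) = f(|y|)` on `ℝ⁴` has `ΔΨ = r⁻³ (r³ f')'`, so the equation says
`(r³ f')' = -r³ / (1 + r²)`. The flux `r³ f'` vanishes at the origin, hence
`r³ f' = -(r² - log (1 + r²)) / 2`, and a second integration gives
`f(r) = f(0) + 1/4 - (1 + r⁻²) log (1 + r²) / 4`. The asymptotics, with `I = f(0) + 1/4`, are
read off from `log (1 + r²) = 2 log r + log (1 + r⁻²)`.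
-/

open Filter Set
open scoped Laplacian RealInnerProductSpace Topology

section RadialLaplacian

variable {E : Type*} [NormedAddCommGroup E] [InnerProductSpace ℝ E] {f : ℝ → ℝ} {x : E}

theorem hasFDerivAt_comp_norm {f' : ℝ} (hx : x ≠ 0) (hf : HasDerivAt f f' ‖x‖) :
    HasFDerivAt (fun y : E => f ‖y‖) ((f' / ‖x‖) • innerSL ℝ x) x := by
  have hnorm : HasFDerivAt (fun y : E => ‖y‖) (‖x‖⁻¹ • innerSL ℝ x) x := by
    have hsqrt := (hasStrictFDerivAt_norm_sq x).hasFDerivAt.sqrt (by positivity)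
    simp only [Real.sqrt_sq (norm_nonneg _)] at hsqrt
    refine hsqrt.congr_fderiv ?_
    rw [← Nat.cast_smul_eq_nsmul ℝ, smul_smul]
    congr 1
    field_simp
    norm_num
  refine (hf.comp_hasFDerivAt x hnorm).congr_fderiv ?_
  rw [smul_smul, div_eq_mul_inv]

theorem fderiv_fderiv_comp_norm_apply_apply_self (hx : x ≠ 0) (hf : ContDiffAt ℝ 2 f ‖x‖) (v : E) :
    fderiv ℝ (fderiv ℝ fun y : E => f ‖y‖) x v v =
      deriv (deriv f) ‖x‖ * (⟪x, v⟫ / ‖x‖) ^ 2 +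
        deriv f ‖x‖ / ‖x‖ * (‖v‖ ^ 2 - (⟪x, v⟫ / ‖x‖) ^ 2) := by
  have hx' : ‖x‖ ≠ 0 := norm_ne_zero_iff.2 hx
  have hfderiv : fderiv ℝ (fun y : E => f ‖y‖) =ᶠ[𝓝 x]
      fun y => (deriv f ‖y‖ / ‖y‖) • innerSL ℝ y := by
    have hdiff : ∀ᶠ y in 𝓝 x, ContDiffAt ℝ 2 f ‖y‖ :=
      continuous_norm.continuousAt.eventually (hf.eventually (by simp))
    filter_upwards [hdiff, eventually_ne_nhds hx] with y hy hy0
    exact (hasFDerivAt_comp_norm hy0 (hy.differentiableAt (by simp)).hasDerivAt).fderiv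
  have hderiv : HasDerivAt (deriv f) (deriv (deriv f) ‖x‖) ‖x‖ :=
    ((hf.derivWithin (m := 1) (by norm_num)).differentiableAt (by simp)).hasDerivAt
  have hquot : HasFDerivAt (fun y : E => deriv f ‖y‖ / ‖y‖) _ x :=
    hasFDerivAt_comp_norm hx (hderiv.div (hasDerivAt_id _) hx')
  -- `innerSL ℝ` is declared conjugate-linear in its first argument; over `ℝ` the ascription holds
  -- definitionally, but `innerSL_apply_apply` does not fire at this type.
  have hinner (y z : E) : (innerSL ℝ : E →L[ℝ] E →L[ℝ] ℝ) y z = ⟪y, z⟫ := rfl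
  rw [hfderiv.fderiv_eq, (hquot.fun_smul (innerSL ℝ (E := E)).hasFDerivAt).fderiv]
  simp only [id_eq, mul_one, add_apply, smul_apply, ContinuousLinearMap.smulRight_apply, hinner,
    smul_eq_mul, real_inner_self_eq_norm_sq]
  field_simp
  ring

theorem laplacian_comp_norm [FiniteDimensional ℝ E] (hx : x ≠ 0) (hf : ContDiffAt ℝ 2 f ‖x‖) :
    Δ (fun y : E => f ‖y‖) x =
      deriv (deriv f) ‖x‖ + (Module.finrank ℝ E - 1) * (deriv f ‖x‖ / ‖x‖) := by
  have hx' : ‖x‖ ≠ 0 := norm_ne_zero_iff.2 hx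
  rw [InnerProductSpace.laplacian_eq_iteratedFDeriv_stdOrthonormalBasis]
  have hproj : ∑ i, (⟪x, stdOrthonormalBasis ℝ E i⟫ / ‖x‖) ^ 2 = 1 := by
    simp_rw [div_pow, ← Finset.sum_div, OrthonormalBasis.sum_sq_inner_left]
    field_simp
  simp only [iteratedFDeriv_two_apply, Matrix.cons_val_zero, Matrix.cons_val_one,
    fderiv_fderiv_comp_norm_apply_apply_self hx hf, OrthonormalBasis.norm_eq_one,
    Finset.sum_add_distrib, ← Finset.mul_sum, Finset.sum_sub_distrib, hproj, one_pow,
    Finset.sum_const, Finset.card_univ, Fintype.card_fin, nsmul_eq_mul]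
  ring

end RadialLaplacian

theorem laplacian_eq_innerProductSpace_laplacian {u : EuclideanSpace ℝ (Fin 4) → ℝ}
    {x : EuclideanSpace ℝ (Fin 4)} (hu : ContDiffAt ℝ 2 u x) : laplacian u x = Δ u x := by
  have hfderiv : DifferentiableAt ℝ (fderiv ℝ u) x :=
    (hu.fderiv_right (m := 1) (by norm_num)).differentiableAt (by simp)
  rw [laplacian, InnerProductSpace.laplacian_eq_iteratedFDeriv_orthonormalBasis u
    (EuclideanSpace.basisFun (Fin 4) ℝ)]
  simp [iteratedFDeriv_two_apply, fderiv_clm_apply hfderiv (differentiableAt_const _)]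

/-- The radial function `P` with `ΔP = 1 / (1 + |y|²)` on `ℝ⁴ ∖ {0}`, as a function of `r = |y|`.
It extends smoothly to the origin with value `1/4`, whereas the formula takes the junk value `0`
at `r = 0`. -/
noncomputable def bubblePotential (r : ℝ) : ℝ :=
  (1 + (r ^ 2)⁻¹) * Real.log (1 + r ^ 2) / 4

theorem hasDerivAt_log_one_add_sq (r : ℝ) :
    HasDerivAt (fun s : ℝ => Real.log (1 + s ^ 2)) (2 * r / (1 + r ^ 2)) r := by
  simpa using ((hasDerivAt_pow 2 r).const_add 1).log (by positivity)

theorem hasDerivAt_bubblePotential {r : ℝ} (hr : r ≠ 0) :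
    HasDerivAt bubblePotential ((r ^ 2 - Real.log (1 + r ^ 2)) / 2 / r ^ 3) r := by
  have hinv := ((hasDerivAt_pow 2 r).inv (by positivity)).const_add 1
  refine ((hinv.mul (hasDerivAt_log_one_add_sq r)).div_const 4).congr_deriv ?_
  simp only [Nat.cast_ofNat, Nat.add_one_sub_one, pow_one, Pi.inv_apply]
  field_simp
  ring

theorem tendsto_bubblePotential_zero : Tendsto bubblePotential (𝓝[>] 0) (𝓝 (1 / 4)) := by
  have hsq : Tendsto (fun r : ℝ => r ^ 2) (𝓝[>] 0) (𝓝[≠] 0) := by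
    refine tendsto_nhdsWithin_iff.2 ⟨?_, ?_⟩
    · exact tendsto_nhdsWithin_of_tendsto_nhds (Continuous.tendsto' (by fun_prop) _ _ (by simp))
    · filter_upwards [self_mem_nhdsWithin] with r hr using pow_ne_zero 2 (ne_of_gt hr)
  have hslope : Tendsto (fun r : ℝ => (r ^ 2)⁻¹ * Real.log (1 + r ^ 2)) (𝓝[>] 0) (𝓝 1) := by
    simpa [Function.comp_def] using (Real.hasDerivAt_log one_ne_zero).tendsto_slope_zero.comp hsq
  have hlog : Tendsto (fun r : ℝ => Real.log (1 + r ^ 2)) (𝓝[>] 0) (𝓝 0) := by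
    have := (hasDerivAt_log_one_add_sq 0).continuousAt.tendsto
    exact tendsto_nhdsWithin_of_tendsto_nhds (by simpa using this)
  have hsum := (hlog.add hslope).div_const 4
  rw [zero_add] at hsum
  exact hsum.congr fun r => by rw [bubblePotential]; ring

theorem log_one_add_sq_le_two_mul {x : ℝ} (hx : 0 ≤ x) : Real.log (1 + x ^ 2) ≤ 2 * x :=
  calc
    Real.log (1 + x ^ 2) ≤ Real.log ((1 + x) ^ 2) := Real.log_le_log (by positivity) (by nlinarith)
    _ = 2 * Real.log (1 + x) := by simp
    _ ≤ 2 * x := by linarith [Real.log_le_sub_one_of_pos (x := 1 + x) (by positivity)]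

theorem abs_bubblePotential_sub_log_le {r : ℝ} (hr : 0 < r) :
    |bubblePotential r - 1 / 2 * Real.log r| ≤ 1 / r := by
  have hlog : Real.log (1 + r ^ 2) = 2 * Real.log r + Real.log (1 + r⁻¹ ^ 2) := by
    have hfactor : 1 + r ^ 2 = r ^ 2 * (1 + r⁻¹ ^ 2) := by field_simp; ring
    rw [hfactor, Real.log_mul (by positivity) (by positivity), Real.log_pow, Nat.cast_ofNat]
  have hsplit : bubblePotential r - 1 / 2 * Real.log r =
      (r⁻¹ ^ 2 * Real.log (1 + r ^ 2) + Real.log (1 + r⁻¹ ^ 2)) / 4 := by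
    rw [bubblePotential, ← inv_pow]
    linear_combination hlog / 4
  have hnonneg (x : ℝ) : 0 ≤ Real.log (1 + x ^ 2) := Real.log_nonneg (by nlinarith [sq_nonneg x])
  rw [hsplit, abs_of_nonneg (by have := hnonneg r; have := hnonneg r⁻¹; positivity)]
  calc
    (r⁻¹ ^ 2 * Real.log (1 + r ^ 2) + Real.log (1 + r⁻¹ ^ 2)) / 4
      ≤ (r⁻¹ ^ 2 * (2 * r) + 2 * r⁻¹) / 4 := by
        gcongr
        exacts [log_one_add_sq_le_two_mul hr.le, log_one_add_sq_le_two_mul (by positivity)]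
    _ = 1 / r := by field_simp; norm_num

section RadialEquation

variable {f : ℝ → ℝ}

theorem pow_three_mul_deriv_eq_of_radial_equation (hf : ContDiff ℝ 2 f)
    (hode : ∀ r, 0 < r → deriv (deriv f) r + 3 * (deriv f r / r) + 1 / (1 + r ^ 2) = 0)
    {r : ℝ} (hr : 0 ≤ r) : r ^ 3 * deriv f r = -((r ^ 2 - Real.log (1 + r ^ 2)) / 2) := by
  set G : ℝ → ℝ := fun s => s ^ 3 * deriv f s + (s ^ 2 - Real.log (1 + s ^ 2)) / 2
  have hderiv (s : ℝ) : HasDerivAt (deriv f) (deriv (deriv f) s) s :=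
    ((hf.deriv' (n := 1)).differentiable (by simp) s).hasDerivAt
  have hG (s : ℝ) (hs : 0 ≤ s) : HasDerivAt G 0 s := by
    have hflux := ((hasDerivAt_pow 3 s).mul (hderiv s)).add
      (((hasDerivAt_pow 2 s).sub (hasDerivAt_log_one_add_sq s)).div_const 2)
    refine hflux.congr_deriv ?_
    rcases hs.eq_or_lt with rfl | hs
    · simp
    · have := hode s hs
      field_simp at this ⊢
      push_cast
      linear_combination 2 * s ^ 2 * this
  have hconst : G r = G 0 := constant_of_has_deriv_right_zero
    (fun s hs => (hG s hs.1).continuousAt.continuousWithinAt)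
    (fun s hs => (hG s hs.1).hasDerivWithinAt) r (right_mem_Icc.2 hr)
  have hG0 : G 0 = 0 := by simp [G]
  linear_combination hconst.trans hG0

theorem eq_sub_bubblePotential_of_radial_equation (hf : ContDiff ℝ 2 f)
    (hode : ∀ r, 0 < r → deriv (deriv f) r + 3 * (deriv f r / r) + 1 / (1 + r ^ 2) = 0)
    {r : ℝ} (hr : 0 < r) : f r = f 0 + 1 / 4 - bubblePotential r := by
  have hderiv (s : ℝ) (hs : 0 < s) : HasDerivAt (fun s => f s + bubblePotential s) 0 s := by
    have hfs := (hf.differentiable (by simp) s).hasDerivAt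
    refine (hfs.add (hasDerivAt_bubblePotential hs.ne')).congr_deriv ?_
    have := pow_three_mul_deriv_eq_of_radial_equation hf hode hs.le
    field_simp
    linarith
  have hconst (s : ℝ) (hs : 0 < s) : f s + bubblePotential s = f r + bubblePotential r :=
    isOpen_Ioi.is_const_of_deriv_eq_zero isPreconnected_Ioi
      (fun t ht => (hderiv t ht).differentiableAt.differentiableWithinAt)
      (fun t ht => (hderiv t ht).deriv) hs hr
  have hlim : Tendsto (fun s => f s + bubblePotential s) (𝓝[>] 0) (𝓝 (f 0 + 1 / 4)) :=
    (tendsto_nhdsWithin_of_tendsto_nhds (hf.continuous.tendsto 0)).add tendsto_bubblePotential_zero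
  have hlim' : Tendsto (fun s => f s + bubblePotential s) (𝓝[>] 0)
      (𝓝 (f r + bubblePotential r)) :=
    tendsto_const_nhds.congr' (by filter_upwards [self_mem_nhdsWithin] with s hs using
      (hconst s hs).symm)
  linarith [tendsto_nhds_unique hlim hlim']

end RadialEquation

theorem radial_solution_eq_sub_bubblePotential {Ψ : EuclideanSpace ℝ (Fin 4) → ℝ}
    (hΨ : ContDiff ℝ 2 Ψ) (hrad : ∀ y z, ‖y‖ = ‖z‖ → Ψ y = Ψ z)
    (heq : ∀ y, laplacian Ψ y + 1 / (1 + ‖y‖ ^ 2) = 0)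
    {y : EuclideanSpace ℝ (Fin 4)} (hy : y ≠ 0) :
    Ψ y = Ψ 0 + 1 / 4 - bubblePotential ‖y‖ := by
  set e : EuclideanSpace ℝ (Fin 4) := EuclideanSpace.single 0 1
  set f : ℝ → ℝ := fun r => Ψ (r • e)
  have he : ‖e‖ = 1 := by simp [e]
  have hf : ContDiff ℝ 2 f := hΨ.comp (contDiff_id.smul contDiff_const)
  have hprofile : Ψ = fun z => f ‖z‖ := funext fun z => hrad _ _ (by simp [norm_smul, he])
  have hode (r : ℝ) (hr : 0 < r) :
      deriv (deriv f) r + 3 * (deriv f r / r) + 1 / (1 + r ^ 2) = 0 := by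
    have hre : ‖r • e‖ = r := by simp [norm_smul, he, hr.le]
    have hre0 : r • e ≠ 0 := norm_pos_iff.1 (hre.symm ▸ hr)
    have h := heq (r • e)
    rw [laplacian_eq_innerProductSpace_laplacian hΨ.contDiffAt, hprofile,
      laplacian_comp_norm hre0 hf.contDiffAt, hre, finrank_euclideanSpace_fin] at h
    convert h using 3
    norm_num
  have h := eq_sub_bubblePotential_of_radial_equation hf hode (norm_pos_iff.2 hy)
  rw [congrFun hprofile y, h]
  simp [f]

theorem radial_solution_dim4_log_asymptotics_general {Ψ : EuclideanSpace ℝ (Fin 4) → ℝ}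
    (hΨ : ContDiff ℝ 2 Ψ) (hrad : ∀ y z, ‖y‖ = ‖z‖ → Ψ y = Ψ z)
    (heq : ∀ y, laplacian Ψ y + 1 / (1 + ‖y‖ ^ 2) = 0)
    {y : EuclideanSpace ℝ (Fin 4)} (hy : y ≠ 0) :
    |Ψ y + (1 / 2) * Real.log ‖y‖ - (Ψ 0 + 1 / 4)| ≤ 1 / ‖y‖ := by
  rw [radial_solution_eq_sub_bubblePotential hΨ hrad heq hy, ← abs_neg]
  convert abs_bubblePotential_sub_log_le (norm_pos_iff.2 hy) using 2
  ring

theorem radial_solution_dim4_log_asymptotics (Ψ : EuclideanSpace ℝ (Fin 4) → ℝ)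
    (h1 : ContDiff ℝ 2 Ψ)
    (h2 : ∀ y z, ‖y‖ = ‖z‖ → Ψ y = Ψ z)
    (h3 : ∀ y, laplacian Ψ y + 1 / (1 + ‖y‖ ^ 2) = 0)
    (h4 : Ψ 0 = 1) :
    ∃ (I C : ℝ), 0 < C ∧
      ∀ y : EuclideanSpace ℝ (Fin 4), 2 ≤ ‖y‖ →
        |Ψ y + (1 / 2) * Real.log ‖y‖ - I| ≤ C / ‖y‖ :=
  ⟨Ψ 0 + 1 / 4, 1, one_pos, fun _ hy => radial_solution_dim4_log_asymptotics_general h1 h2 h3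
    (norm_pos_iff.1 (two_pos.trans_le hy))⟩
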